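/- Let n ≥ 1, η > 0, L ∈ ℝⁿ, and k ∈ {1,…,n}. Let x be the unique minimizer over the interior simplex {p ∈ Δ_n : p_j > 0 for all j} of ⟨L, p⟩ + (1/η)·Ψ(p), where Ψ is the log-barrier regularizer, and let x̃ be the unique minimizer over the interior simplex of ⟨L + (l/x_k)·e_k, p⟩ + (1/η)·Ψ(p). If −1/(2η) ≤ l ≤ 0, then x̃_k ≤ 2·x_k. -/

import Mathlib

/-!
At an interior minimizer `p` of `⟨M, ·⟩ + (1/η) Ψ` on the simplex, the derivative in every direction
`d` with `∑ d = 0` vanishes; with `d = e_k - e_j` this gives `M_k - 1/(η p_k) = M_j - 1/(η p_j)`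
(`log_barrier_two_coord`). If `x̃_k > x_k`, mass conservation yields an arm `j ≠ k` with
`x̃_j < x_j`. Subtracting the conditions for `x` and `x̃` at the pair `(k, j)`,
`1/x̃_k - 1/x_k = η l / x_k + (1/x̃_j - 1/x_j) ≥ η l / x_k ≥ -1/(2 x_k)`,
so `1/x̃_k ≥ 1/(2 x_k)`.
-/

open Finset

/-- First-order optimality condition for log-barrier FTRL with loss vector `M`, along a direction
tangent to the simplex. -/
lemma log_barrier_first_order (n : ℕ) (η : ℝ) (M p : Fin n → ℝ) (hp : ∀ j, 0 < p j)
    (hsum : ∑ j, p j = 1)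
    (hmin : ∀ q : Fin n → ℝ, (∀ j, 0 < q j) → ∑ j, q j = 1 →
      (∑ j, M j * p j)
          + (1 / η) * (∑ j, (Real.log (1 / p j) - Real.log (1 / (n : ℝ))))
        ≤ (∑ j, M j * q j)
          + (1 / η) * (∑ j, (Real.log (1 / q j) - Real.log (1 / (n : ℝ)))))
    (d : Fin n → ℝ) (hd : ∑ j, d j = 0) :
    (∑ j, M j * d j) + (1 / η) * ∑ j, -(d j / p j) = 0 := by
  have hline : ∀ j, HasDerivAt (fun t : ℝ => p j + t * d j) (d j) 0 := fun j => by
    simpa using ((hasDerivAt_id (0 : ℝ)).mul_const (d j)).const_add (p j)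
  have hder : HasDerivAt (fun t : ℝ => (∑ j, M j * (p j + t * d j))
      + (1 / η) * (∑ j, (Real.log (1 / (p j + t * d j)) - Real.log (1 / (n : ℝ)))))
      ((∑ j, M j * d j) + (1 / η) * ∑ j, -(d j / p j)) 0 := by
    refine HasDerivAt.add (HasDerivAt.fun_sum fun j _ => (hline j).const_mul (M j))
      (HasDerivAt.const_mul _ (HasDerivAt.fun_sum fun j _ => ?_))
    have h := (((hline j).log (by simpa using (hp j).ne')).neg).sub_const (Real.log (1 / (n : ℝ)))
    simpa [Real.log_inv] using h
  refine IsLocalMin.hasDerivAt_eq_zero ?_ hder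
  have hpos : ∀ᶠ t in nhds (0 : ℝ), ∀ j, 0 < p j + t * d j :=
    Filter.eventually_all.2 fun j =>
      (hline j).continuousAt.eventually_const_lt (by simpa using hp j)
  filter_upwards [hpos] with t ht
  have h := hmin (fun j => p j + t * d j) ht (by
    rw [sum_add_distrib, ← mul_sum, hd, hsum]; ring)
  simpa using h

/-- Stationarity under moving mass between two arms: the gradient coordinates
`M_i - 1/(η p_i)` agree, stated after multiplying by `η`. -/
lemma log_barrier_two_coord (n : ℕ) (η : ℝ) (hη : 0 < η) (M p : Fin n → ℝ)
    (hp : ∀ j, 0 < p j) (hsum : ∑ j, p j = 1)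
    (hmin : ∀ q : Fin n → ℝ, (∀ j, 0 < q j) → ∑ j, q j = 1 →
      (∑ j, M j * p j)
          + (1 / η) * (∑ j, (Real.log (1 / p j) - Real.log (1 / (n : ℝ))))
        ≤ (∑ j, M j * q j)
          + (1 / η) * (∑ j, (Real.log (1 / q j) - Real.log (1 / (n : ℝ)))))
    (k j : Fin n) : η * (M k - M j) = 1 / p k - 1 / p j := by
  have h := log_barrier_first_order n η M p hp hsum hmin
    (fun i => (if i = k then 1 else 0) - (if i = j then 1 else 0)) (by simp)
  simp only [mul_sub, sub_div, sum_sub_distrib, sum_neg_distrib, mul_ite, ite_div, mul_one,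
    mul_zero, zero_div, sum_ite_eq', mem_univ, if_true] at h
  field_simp at h ⊢
  linarith

/-- Lemma 8 of the paper: if the loss on arm `k` is perturbed by an
IW (importance-weighted) amount `l/x_k` with `-1/(2η) ≤ l ≤ 0`, the probability
log-barrier FTRL assigns to arm `k` at most doubles. -/
theorem log_barrier_perturbation (n : ℕ) (hn : 1 ≤ n) (η : ℝ) (hη : 0 < η)
    (L : Fin n → ℝ) (k : Fin n) (l : ℝ)
    (hl1 : -(1 / (2 * η)) ≤ l) (hl2 : l ≤ 0)
    (x : Fin n → ℝ) (hx : (∀ j, 0 < x j) ∧ ∑ j, x j = 1)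
    (hxmin : ∀ q : Fin n → ℝ, (∀ j, 0 < q j) → ∑ j, q j = 1 →
      (∑ j, L j * x j)
          + (1 / η) * (∑ j, (Real.log (1 / x j) - Real.log (1 / (n : ℝ))))
        ≤ (∑ j, L j * q j)
          + (1 / η) * (∑ j, (Real.log (1 / q j) - Real.log (1 / (n : ℝ)))))
    (xt : Fin n → ℝ) (hxt : (∀ j, 0 < xt j) ∧ ∑ j, xt j = 1)
    (hxtmin : ∀ q : Fin n → ℝ, (∀ j, 0 < q j) → ∑ j, q j = 1 →
      (∑ j, (L j + (if j = k then l / x k else 0)) * xt j)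
          + (1 / η) * (∑ j, (Real.log (1 / xt j) - Real.log (1 / (n : ℝ))))
        ≤ (∑ j, (L j + (if j = k then l / x k else 0)) * q j)
          + (1 / η) * (∑ j, (Real.log (1 / q j) - Real.log (1 / (n : ℝ))))) :
    xt k ≤ 2 * x k := by
  obtain ⟨hx0, hx1⟩ := hx
  obtain ⟨ht0, ht1⟩ := hxt
  by_contra! hcon
  have hlt : x k < xt k := by linarith [hx0 k]
  obtain ⟨j, hj⟩ : ∃ j, xt j < x j := by
    by_contra! hge
    have := sum_lt_sum (fun i _ => hge i) ⟨k, mem_univ k, hlt⟩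
    linarith
  have hjk : j ≠ k := by
    rintro rfl
    exact lt_asymm hj hlt
  have h1 := log_barrier_two_coord n η hη L x hx0 hx1 hxmin k j
  have h2 := log_barrier_two_coord n η hη _ xt ht0 ht1 hxtmin k j
  simp only [if_true, if_neg hjk] at h2
  have hinv : 1 / x j < 1 / xt j := one_div_lt_one_div_of_lt (ht0 j) hj
  have hinv' : 1 / xt k < 1 / (2 * x k) :=
    one_div_lt_one_div_of_lt (by linarith [hx0 k]) hcon
  have hloss : -(1 / (2 * x k)) ≤ η * (l / x k) := by
    have hηl : -(1 / 2) ≤ η * l := by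
      have := mul_le_mul_of_nonneg_left hl1 hη.le
      have e : η * -(1 / (2 * η)) = -(1 / 2) := by field_simp
      linarith
    have := div_le_div_of_nonneg_right hηl (hx0 k).le
    have e : -(1 / (2 * x k)) = -(1 / 2) / x k := by field_simp
    rw [e, ← mul_div_assoc]
    exact this
  have hhalf : 1 / x k = 2 * (1 / (2 * x k)) := by field_simp
  linarith
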